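/- arXiv:math/9802022 — 4 statements merged into one kernel-verified Lean document; each statement's English description precedes it below -/
import Mathlib

section
/- Let C ∈ ℂ with C ≠ 0, C ≠ 1 and C ≠ −1. Then the polynomial P(m, b) = b·m² − b − C·b²·m + C·m is irreducible in the polynomial ring ℂ[m, b] in two commuting variables m and b. -/
open MvPolynomial

/-!
View `P` as the quadratic `b·m² + c(1 - b²)·m - b` in `m`, with coefficients in a domain in which
`b` is prime and does not divide `γ = c(1 - b²)`. It is primitive, so a nontrivial factorization is
`(p m + q)(r m + s)` with `p r = b`, `q s = -b` and `p s + q r = γ`. By symmetry `b ∣ p`; then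
`b ∤ q`, as `b ∤ γ`, and so `b ∣ s`. Cancelling `b` leaves units: `γ = b² w - w⁻¹` for a unit `w`.
Units of a polynomial ring over a domain are constants, so setting `b = 0` and `b = 1` gives
`w⁻¹ = -c` and `w = w⁻¹`, hence `c² = 1`.
-/

section Quadratic

open Polynomial

theorem isPrimitive_of_isRelPrime_coeff {A : Type*} [CommSemiring A] {f : A[X]} {i j : ℕ}
    (h : IsRelPrime (f.coeff i) (f.coeff j)) : f.IsPrimitive := fun t ht ↦
  have ht_coeff := (Polynomial.C_dvd_iff_dvd_coeff t f).mp ht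
  h (ht_coeff i) (ht_coeff j)

theorem irreducible_of_isPrimitive_of_natDegree_eq_two {A : Type*} [CommSemiring A]
    [NoZeroDivisors A] {f : A[X]} (hprim : f.IsPrimitive) (hdeg : f.natDegree = 2)
    (hlin : ∀ p q r s : A, f ≠ (.C p * .X + .C q) * (.C r * .X + .C s)) : Irreducible f := by
  have isUnit_of_dvd {g : A[X]} (hg : g ∣ f) (hg_deg : g.natDegree = 0) : IsUnit g := by
    obtain ⟨t, rfl⟩ := natDegree_eq_zero.mp hg_deg
    exact (hprim t hg).map Polynomial.C
  refine ⟨fun hf ↦ by simp [natDegree_eq_zero_of_isUnit hf] at hdeg, fun g h hgh ↦ ?_⟩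
  have hf0 : g * h ≠ 0 := hgh ▸ ne_zero_of_natDegree_gt (hdeg ▸ two_pos)
  have hdeg_add : g.natDegree + h.natDegree = 2 := by
    rw [← natDegree_mul (left_ne_zero_of_mul hf0) (right_ne_zero_of_mul hf0), ← hgh, hdeg]
  rcases Nat.eq_zero_or_pos g.natDegree with hg | hg
  · exact .inl (isUnit_of_dvd (Dvd.intro _ hgh.symm) hg)
  rcases Nat.eq_zero_or_pos h.natDegree with hh | hh
  · exact .inr (isUnit_of_dvd (Dvd.intro_left _ hgh.symm) hh)
  obtain ⟨p, q, rfl⟩ := exists_eq_X_add_C_of_natDegree_le_one (p := g) (by lia)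
  obtain ⟨r, s, rfl⟩ := exists_eq_X_add_C_of_natDegree_le_one (p := h) (by lia)
  exact absurd hgh (hlin p q r s)

variable {A : Type*} [CommRing A] [IsDomain A] {b γ : A}

theorem exists_unit_eq_sq_mul_sub_inv (hb : Prime b) (hγ : ¬ b ∣ γ) {p q r s : A}
    (hpr : p * r = b) (hqs : q * s = -b) (hpsqr : p * s + q * r = γ) :
    ∃ w : Aˣ, γ = b ^ 2 * w - ↑w⁻¹ := by
  wlog hp : b ∣ p generalizing p q r s
  · have hr : b ∣ r := (hb.dvd_or_dvd hpr.symm.dvd).resolve_left hp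
    exact this (by rw [mul_comm, hpr]) (by rw [mul_comm, hqs])
      (by linear_combination hpsqr) hr
  have hq : ¬ b ∣ q := fun hq ↦ hγ (hpsqr ▸ dvd_add (hp.mul_right s) (hq.mul_right r))
  have hs : b ∣ s := (hb.dvd_or_dvd (hqs ▸ (dvd_refl b).neg_right)).resolve_left hq
  obtain ⟨u, rfl⟩ := hp
  obtain ⟨v, rfl⟩ := hs
  have hur : u * r = 1 := mul_left_cancel₀ hb.ne_zero (by linear_combination hpr)
  have hqv : q * v = -1 := mul_left_cancel₀ hb.ne_zero (by linear_combination hqs)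
  have huv : u * v * -(q * r) = 1 := by linear_combination -(q * v) * hur - hqv
  refine ⟨⟨u * v, -(q * r), huv, by rw [mul_comm, huv]⟩, ?_⟩
  simp only [Units.inv_mk]
  linear_combination -hpsqr

theorem irreducible_quadratic_of_prime (hb : Prime b) (hγ : ¬ b ∣ γ)
    (hunit : ∀ w : Aˣ, γ ≠ b ^ 2 * w - ↑w⁻¹) :
    Irreducible (.C b * .X ^ 2 + .C γ * .X + .C (-b) : A[X]) := by
  have coeff_two (a d e : A) : (.C a * .X ^ 2 + .C d * .X + .C e : A[X]).coeff 2 = a := by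
    simp
  have coeff_one (a d e : A) : (.C a * .X ^ 2 + .C d * .X + .C e : A[X]).coeff 1 = d := by
    simp [Polynomial.coeff_C]
  have coeff_zero (a d e : A) : (.C a * .X ^ 2 + .C d * .X + .C e : A[X]).coeff 0 = e := by
    simp
  refine irreducible_of_isPrimitive_of_natDegree_eq_two ?_ (natDegree_quadratic hb.ne_zero) ?_
  · refine isPrimitive_of_isRelPrime_coeff (i := 2) (j := 1) ?_
    rw [coeff_two, coeff_one]
    exact hb.irreducible.isRelPrime_iff_not_dvd.mpr hγ
  · intro p q r s hfactor
    have hexpand : (.C p * .X + .C q) * (.C r * .X + .C s) =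
        (.C (p * r) * .X ^ 2 + .C (p * s + q * r) * .X + .C (q * s) : A[X]) := by
      simp only [map_add, map_mul]
      ring
    rw [hexpand] at hfactor
    have hpr := congrArg (Polynomial.coeff · 2) hfactor
    have hpsqr := congrArg (Polynomial.coeff · 1) hfactor
    have hqs := congrArg (Polynomial.coeff · 0) hfactor
    simp only [coeff_two, coeff_one, coeff_zero] at hpr hpsqr hqs
    obtain ⟨w, hw⟩ := exists_unit_eq_sq_mul_sub_inv hb hγ hpr.symm hqs.symm hpsqr.symm
    exact hunit w hw

end Quadratic

section Coefficients

variable {σ R : Type*} [CommRing R] {c : R} {i : σ}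

theorem not_X_dvd_C_mul_one_sub_X_sq (hc : c ≠ 0) :
    ¬ (X i : MvPolynomial σ R) ∣ C c * (1 - X i ^ 2) := by
  intro hdvd
  have hdvd_const := map_dvd constantCoeff hdvd
  exact hc (by simpa using hdvd_const)

theorem sq_eq_one_of_C_mul_one_sub_X_sq_eq [IsReduced R] (w : (MvPolynomial σ R)ˣ)
    (hw : C c * (1 - X i ^ 2) = X i ^ 2 * w.val - w⁻¹.val) : c ^ 2 = 1 := by
  obtain ⟨z, -, hz⟩ := isUnit_iff_eq_C_of_isReduced.mp w.isUnit
  obtain ⟨z', -, hz'⟩ := isUnit_iff_eq_C_of_isReduced.mp w⁻¹.isUnit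
  have hzz' : z * z' = 1 := C_injective σ R (by rw [map_mul, ← hz, ← hz', w.mul_inv, map_one])
  rw [hz, hz'] at hw
  have eval_zero : c = -z' := by simpa using congrArg (eval fun _ ↦ 0) hw
  have eval_one : 0 = z - z' := by simpa using congrArg (eval fun _ ↦ 1) hw
  calc
    c ^ 2 = z' * z' := by rw [eval_zero, neg_sq, sq]
    _ = z * z' := by rw [sub_eq_zero.mp eval_one.symm]
    _ = 1 := hzz'

end Coefficients

theorem stmt_1_general {R : Type*} [CommRing R] [IsDomain R] {c : R} (hc0 : c ≠ 0) (hc1 : c ≠ 1)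
    (hcm1 : c ≠ -1) :
    Irreducible
      (X 1 * X 0 ^ 2 - X 1 - C c * X 1 ^ 2 * X 0 + C c * X 0 : MvPolynomial (Fin 2) R) := by
  have hquadratic := irreducible_quadratic_of_prime (X_prime (i := (0 : Fin 1)) (R := R))
    (not_X_dvd_C_mul_one_sub_X_sq hc0) fun w hw ↦
      sq_ne_one_iff.mpr ⟨hc1, hcm1⟩ (sq_eq_one_of_C_mul_one_sub_X_sq_eq w hw)
  have map_m : finSuccEquiv R 1 (X 0) = .X := finSuccEquiv_X_zero
  have map_b : finSuccEquiv R 1 (X 1) = .C (X 0) := finSuccEquiv_X_succ (j := 0)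
  have map_c : finSuccEquiv R 1 (C c) = .C (C c) := by simp [finSuccEquiv_apply]
  rw [← MulEquiv.irreducible_iff (finSuccEquiv R 1)]
  convert hquadratic using 1
  simp only [map_add, map_sub, map_mul, map_pow, map_neg, map_one, map_m, map_b, map_c]
  ring

/-- For `C ≠ 0, ±1`, the polynomial `P(m,b) = b·m² − b − C·b²·m + C·m`
is irreducible in `ℂ[m,b]`.  Here `X 0` plays the role of `m` and `X 1`
plays the role of `b`. -/
theorem stmt_1 (c : ℂ) (hc0 : c ≠ 0) (hc1 : c ≠ 1) (hcm1 : c ≠ -1) :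
    Irreducible
      (X 1 * X 0 ^ 2 - X 1 - MvPolynomial.C c * X 1 ^ 2 * X 0 + MvPolynomial.C c * X 0 :
        MvPolynomial (Fin 2) ℂ) :=
  stmt_1_general hc0 hc1 hcm1
end

section
/- Let A, B ∈ SL(2,ℂ) with tr(A) = tr(B), tr(A) ≠ 2 and tr(A) ≠ −2, and suppose A and B have no common eigenvector (no nonzero v ∈ ℂ² is an eigenvector of both A and B). Then there are exactly two pairs (a, s) with a ∈ ℂ, a ≠ 0, and s ∈ ℂ, for which there exists P ∈ SL(2,ℂ) with P·A·P⁻¹ equal to the matrix with rows (a, 1) and (0, a⁻¹), and P·B·P⁻¹ equal to the matrix with rows (a, 0) and (s, a⁻¹). -/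
open Matrix

/-!
Conjugation preserves traces, so a normal form with parameters `(a, s)` has `a + a⁻¹ = tr A` and
`a² + a⁻² + s = tr (A B)`. Hence `a` is an eigenvalue of `A` and `s` is a function of `a`. There
are two eigenvalues `a, a⁻¹`, because `tr A ≠ ±2`. Conversely every eigenvalue `a` of `A` occurs:
take an eigenvector `w` of `B` for `a⁻¹` and put `v = (A - a⁻¹) w`. By Cayley–Hamilton `A v = a v`,
and `v, w` are independent because `w` is not an eigenvector of `A`. In the basis `v, w`, rescaled
to have determinant one, `A` and `B` are in normal form.
-/

open scoped MatrixGroups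

section ChangeOfBasis

variable {n K : Type*} [Fintype n]

lemma linearIndependent_pair_mulVec_sub_smul [Field K] {M : Matrix n n K} {w : n → K}
    (hw : ∀ c : K, M *ᵥ w ≠ c • w) (b : K) : LinearIndependent K ![M *ᵥ w - b • w, w] := by
  have hw₀ : w ≠ 0 := by
    rintro rfl
    simpa using hw 0
  rw [LinearIndependent.pair_symm_iff, LinearIndependent.pair_iff' hw₀]
  intro c hc
  exact hw (c + b) (by rw [add_smul, hc, sub_add_cancel])

variable [DecidableEq n]

local notation:1024 "↑ₘ" A:1024 => ((A : Matrix.SpecialLinearGroup n K) : Matrix n n K)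

lemma trace_specialLinearGroup_conj [CommRing K] (P A : SpecialLinearGroup n K) :
    trace ↑ₘ(P * A * P⁻¹) = trace ↑ₘA := by
  rw [Matrix.SpecialLinearGroup.coe_mul, trace_mul_comm, ← Matrix.SpecialLinearGroup.coe_mul,
    inv_mul_cancel_left]

variable [Field K]

lemma exists_mulVec_eq_smul_of_isRoot_charpoly {M : Matrix n n K} {b : K}
    (hb : M.charpoly.IsRoot b) : ∃ w ≠ 0, M *ᵥ w = b • w := by
  rw [← mem_spectrum_iff_isRoot_charpoly, ← spectrum_toLin',
    ← Module.End.hasEigenvalue_iff_mem_spectrum] at hb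
  obtain ⟨w, hw⟩ := hb.exists_hasEigenvector
  exact ⟨w, hw.2, hw.apply_eq_smul⟩

variable [IsAlgClosed K]

lemma exists_specialLinearGroup_eq_smul {Q : Matrix n n K} (hQ : Q.det ≠ 0) :
    ∃ (c : K) (P : SpecialLinearGroup n K), ↑ₘP = c • Q := by
  cases isEmpty_or_nonempty n
  · exact ⟨1, 1, Subsingleton.elim _ _⟩
  · obtain ⟨c, hc⟩ := IsAlgClosed.exists_pow_nat_eq Q.det⁻¹ (Fintype.card_pos (α := n))
    exact ⟨c, ⟨c • Q, by rw [det_smul, hc, inv_mul_cancel₀ hQ]⟩, rfl⟩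

lemma exists_specialLinearGroup_conj_col_eq {v : n → n → K} (hv : LinearIndependent K v) :
    ∃ P : SpecialLinearGroup n K, ∀ (A : SpecialLinearGroup n K) (j : n) (x : n → K),
      ↑ₘA *ᵥ v j = ∑ i, x i • v i → col ↑ₘ(P * A * P⁻¹) j = x := by
  have hdet : (of v)ᵀ.det ≠ 0 := by
    rw [det_transpose]
    exact ((isUnit_iff_isUnit_det _).mp (linearIndependent_rows_iff_isUnit.mp hv)).ne_zero
  obtain ⟨c, R, hR⟩ := exists_specialLinearGroup_eq_smul hdet
  have hR_mulVec (x : n → K) : ↑ₘR *ᵥ x = c • ∑ i, x i • v i := by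
    rw [hR, smul_mulVec, mulVec_transpose, vecMul_eq_sum]
    rfl
  refine ⟨R⁻¹, fun A j x hx ↦ ?_⟩
  have hAR : ↑ₘ(A * R) *ᵥ Pi.single j 1 = ↑ₘR *ᵥ x := by
    rw [Matrix.SpecialLinearGroup.coe_mul, ← mulVec_mulVec, hR_mulVec, hR_mulVec, mulVec_smul, ← hx]
    simp [Pi.single_apply]
  calc col ↑ₘ(R⁻¹ * A * R⁻¹⁻¹) j
      = ↑ₘ(R⁻¹) *ᵥ (↑ₘ(A * R) *ᵥ Pi.single j 1) := by
        rw [mulVec_mulVec, ← Matrix.SpecialLinearGroup.coe_mul, mulVec_single_one, inv_inv,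
          mul_assoc]
    _ = x := by
        rw [hAR, mulVec_mulVec, ← Matrix.SpecialLinearGroup.coe_mul, inv_mul_cancel,
          Matrix.SpecialLinearGroup.coe_one, one_mulVec]

end ChangeOfBasis

section Charpoly

open Polynomial

variable {R : Type*} [CommRing R] {M : Matrix (Fin 2) (Fin 2) R} {a b : R}

lemma charpoly_eq_X_sub_C_mul_X_sub_C [Nontrivial R] (htr : M.trace = a + b)
    (hdet : M.det = a * b) : M.charpoly = (X - C a) * (X - C b) := by
  rw [charpoly_fin_two, htr, hdet, C_add, C_mul]
  ring

lemma sub_smul_one_mul_sub_smul_one_eq_zero (htr : M.trace = a + b) (hdet : M.det = a * b) :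
    (M - a • 1) * (M - b • 1) = 0 := by
  nontriviality R
  simpa [charpoly_eq_X_sub_C_mul_X_sub_C htr hdet, Algebra.algebraMap_eq_smul_one]
    using aeval_self_charpoly M

end Charpoly

section NormalForm

variable {K : Type*} [Field K] {A B : SL(2, K)} {a s : K}

local notation:1024 "↑ₘ" A:1024 => ((A : SL(2, K)) : Matrix (Fin 2) (Fin 2) K)

lemma isRoot_charpoly_specialLinearGroup_iff :
    (charpoly ↑ₘA).IsRoot a ↔ a ≠ 0 ∧ trace ↑ₘA = a + a⁻¹ := by
  have heval : (charpoly ↑ₘA).eval a = a ^ 2 - trace ↑ₘA * a + 1 := by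
    simp [charpoly_fin_two]
  rw [Polynomial.IsRoot, heval]
  constructor
  · intro hroot
    have ha : a ≠ 0 := by
      rintro rfl
      simp at hroot
    exact ⟨ha, by field_simp; linear_combination -hroot⟩
  · rintro ⟨ha, htr⟩
    rw [htr]
    field

lemma setOf_isRoot_charpoly_eq_pair_inv (hroot : (charpoly ↑ₘA).IsRoot a) :
    {c | (charpoly ↑ₘA).IsRoot c} = {a, a⁻¹} := by
  obtain ⟨ha, htr⟩ := isRoot_charpoly_specialLinearGroup_iff.mp hroot
  ext c
  rw [charpoly_eq_X_sub_C_mul_X_sub_C htr (by simp [ha])]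
  simp [sub_eq_zero]

lemma ne_inv_of_add_inv_ne (ha : a ≠ 0) (h_two : a + a⁻¹ ≠ 2) (h_neg_two : a + a⁻¹ ≠ -2) :
    a ≠ a⁻¹ := by
  intro h_inv
  rcases mul_self_eq_one_iff.mp ((mul_eq_one_iff_eq_inv₀ ha).mpr h_inv) with rfl | rfl
  · exact h_two (by norm_num)
  · exact h_neg_two (by norm_num)

lemma ncard_setOf_isRoot_charpoly_eq_two [IsAlgClosed K] (h_two : trace ↑ₘA ≠ 2)
    (h_neg_two : trace ↑ₘA ≠ -2) : {c | (charpoly ↑ₘA).IsRoot c}.ncard = 2 := by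
  obtain ⟨a, hroot⟩ := IsAlgClosed.exists_root (charpoly ↑ₘA) (by simp [charpoly_degree_eq_dim])
  obtain ⟨ha, htr⟩ := isRoot_charpoly_specialLinearGroup_iff.mp hroot
  rw [htr] at h_two h_neg_two
  rw [setOf_isRoot_charpoly_eq_pair_inv hroot,
    Set.ncard_pair (ne_inv_of_add_inv_ne ha h_two h_neg_two)]

/-- The pair `(A, B)` is simultaneously conjugate in `SL(2, K)` to the normal form with parameters
`(a, s)`, a point of the variety `V` of the paper. The parameters are meant with `a ≠ 0`,
as `0⁻¹ = 0` in Lean. -/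
def HasNormalForm (A B : SL(2, K)) (a s : K) : Prop :=
  ∃ P : SL(2, K), ↑ₘ(P * A * P⁻¹) = !![a, 1; 0, a⁻¹] ∧ ↑ₘ(P * B * P⁻¹) = !![a, 0; s, a⁻¹]

lemma HasNormalForm.trace_left (h : HasNormalForm A B a s) : trace ↑ₘA = a + a⁻¹ := by
  obtain ⟨P, hA, -⟩ := h
  rw [← trace_specialLinearGroup_conj P, hA, trace_fin_two_of]

lemma HasNormalForm.trace_mul (h : HasNormalForm A B a s) :
    trace ↑ₘ(A * B) = a ^ 2 + a⁻¹ ^ 2 + s := by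
  obtain ⟨P, hA, hB⟩ := h
  rw [← trace_specialLinearGroup_conj P, ← conj_mul, Matrix.SpecialLinearGroup.coe_mul, hA, hB,
    mul_fin_two, trace_fin_two_of]
  ring

variable [IsAlgClosed K]

lemma exists_hasNormalForm_of_mulVec_eq_smul (ha : a ≠ 0) (hA : trace ↑ₘA = a + a⁻¹)
    (hB : trace ↑ₘB = a + a⁻¹) {w : Fin 2 → K} (hBw : ↑ₘB *ᵥ w = a⁻¹ • w)
    (hAw : ∀ c : K, ↑ₘA *ᵥ w ≠ c • w) : ∃ s, HasNormalForm A B a s := by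
  set v := ↑ₘA *ᵥ w - a⁻¹ • w with hv
  have hAv : ↑ₘA *ᵥ v = a • v := by
    have hCH := sub_smul_one_mul_sub_smul_one_eq_zero hA (by simp [ha])
    simpa only [← mulVec_mulVec, sub_mulVec, smul_mulVec, one_mulVec, zero_mulVec, sub_eq_zero,
      ← hv] using congrArg (· *ᵥ w) hCH
  have hAw_eq : ↑ₘA *ᵥ w = v + a⁻¹ • w := (sub_add_cancel _ _).symm
  have hvw : LinearIndependent K ![v, w] := linearIndependent_pair_mulVec_sub_smul hAw a⁻¹
  obtain ⟨P, hP⟩ := exists_specialLinearGroup_conj_col_eq hvw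
  have hA₀ : col ↑ₘ(P * A * P⁻¹) 0 = ![a, 0] := hP A 0 _ (by simpa using hAv)
  have hA₁ : col ↑ₘ(P * A * P⁻¹) 1 = ![1, a⁻¹] := hP A 1 _ (by simpa using hAw_eq)
  have hB₁ : col ↑ₘ(P * B * P⁻¹) 1 = ![0, a⁻¹] := hP B 1 _ (by simpa using hBw)
  have hB₀₀ : ↑ₘ(P * B * P⁻¹) 0 0 = a := by
    have htr := trace_specialLinearGroup_conj P B
    rw [hB, trace_fin_two, show ↑ₘ(P * B * P⁻¹) 1 1 = a⁻¹ from congrFun hB₁ 1] at htr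
    exact add_right_cancel htr
  refine ⟨↑ₘ(P * B * P⁻¹) 1 0, P, ?_, ?_⟩
  · ext i j
    fin_cases j
    · fin_cases i <;> exact congrFun hA₀ _
    · fin_cases i <;> exact congrFun hA₁ _
  · ext i j
    fin_cases j
    · fin_cases i
      · exact hB₀₀
      · rfl
    · fin_cases i <;> exact congrFun hB₁ _

lemma exists_hasNormalForm (ha : a ≠ 0) (hA : trace ↑ₘA = a + a⁻¹) (hB : trace ↑ₘB = a + a⁻¹)
    (h : ¬∃ v : Fin 2 → K, v ≠ 0 ∧ (∃ a : K, ↑ₘA *ᵥ v = a • v) ∧ ∃ b : K, ↑ₘB *ᵥ v = b • v) :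
    ∃ s, HasNormalForm A B a s := by
  have hroot : (charpoly ↑ₘB).IsRoot a⁻¹ :=
    isRoot_charpoly_specialLinearGroup_iff.mpr ⟨inv_ne_zero ha, by rw [hB, inv_inv, add_comm]⟩
  obtain ⟨w, hw, hBw⟩ := exists_mulVec_eq_smul_of_isRoot_charpoly hroot
  exact exists_hasNormalForm_of_mulVec_eq_smul ha hA hB hBw
    fun c hAw ↦ h ⟨w, hw, ⟨c, hAw⟩, a⁻¹, hBw⟩

lemma ne_zero_and_hasNormalForm_iff (htr : trace ↑ₘA = trace ↑ₘB)
    (h : ¬∃ v : Fin 2 → K, v ≠ 0 ∧ (∃ a : K, ↑ₘA *ᵥ v = a • v) ∧ ∃ b : K, ↑ₘB *ᵥ v = b • v) :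
    a ≠ 0 ∧ HasNormalForm A B a s ↔
      (charpoly ↑ₘA).IsRoot a ∧ trace ↑ₘ(A * B) - (a ^ 2 + a⁻¹ ^ 2) = s := by
  rw [isRoot_charpoly_specialLinearGroup_iff, and_assoc]
  refine and_congr_right fun ha ↦ ⟨fun hs ↦ ⟨hs.trace_left, sub_eq_of_eq_add' hs.trace_mul⟩, ?_⟩
  rintro ⟨hA, rfl⟩
  obtain ⟨s, hs⟩ := exists_hasNormalForm ha hA (htr ▸ hA) h
  rwa [hs.trace_mul, add_sub_cancel_left]

theorem stmt_4_general (A B : SL(2, K)) (htr : trace ↑ₘA = trace ↑ₘB)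
    (htr2 : trace ↑ₘA ≠ 2) (htrm2 : trace ↑ₘA ≠ -2)
    (h : ¬∃ v : Fin 2 → K, v ≠ 0 ∧ (∃ a : K, ↑ₘA *ᵥ v = a • v) ∧ ∃ b : K, ↑ₘB *ᵥ v = b • v) :
    {p : K × K | p.1 ≠ 0 ∧ HasNormalForm A B p.1 p.2}.ncard = 2 := by
  have hgraph : {p : K × K | p.1 ≠ 0 ∧ HasNormalForm A B p.1 p.2} =
      Set.graphOn (fun a ↦ trace ↑ₘ(A * B) - (a ^ 2 + a⁻¹ ^ 2))
        {a | (charpoly ↑ₘA).IsRoot a} := by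
    ext ⟨a, s⟩
    rw [Set.mem_graphOn]
    exact ne_zero_and_hasNormalForm_iff htr h
  rw [hgraph, Set.ncard_graphOn, ncard_setOf_isRoot_charpoly_eq_two htr2 htrm2]

end NormalForm

/-- If `A, B ∈ SL(2,ℂ)` have equal traces `≠ ±2` and no common eigenvector,
then there are exactly two pairs `(a, s)` with `a ≠ 0` such that some
`P ∈ SL(2,ℂ)` conjugates `A` to `[[a,1],[0,a⁻¹]]` and `B` to `[[a,0],[s,a⁻¹]]`. -/
theorem stmt_4 (A B : Matrix.SpecialLinearGroup (Fin 2) ℂ)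
    (htr : Matrix.trace (A : Matrix (Fin 2) (Fin 2) ℂ) =
      Matrix.trace (B : Matrix (Fin 2) (Fin 2) ℂ))
    (htr2 : Matrix.trace (A : Matrix (Fin 2) (Fin 2) ℂ) ≠ 2)
    (htrm2 : Matrix.trace (A : Matrix (Fin 2) (Fin 2) ℂ) ≠ -2)
    (h : ¬ ∃ v : Fin 2 → ℂ, v ≠ 0 ∧
        (∃ a : ℂ, (A : Matrix (Fin 2) (Fin 2) ℂ).mulVec v = a • v) ∧
        (∃ b : ℂ, (B : Matrix (Fin 2) (Fin 2) ℂ).mulVec v = b • v)) :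
    Set.ncard {p : ℂ × ℂ | p.1 ≠ 0 ∧
        ∃ P : Matrix.SpecialLinearGroup (Fin 2) ℂ,
          ((P * A * P⁻¹ : Matrix.SpecialLinearGroup (Fin 2) ℂ) :
              Matrix (Fin 2) (Fin 2) ℂ) = !![p.1, 1; 0, p.1⁻¹] ∧
          ((P * B * P⁻¹ : Matrix.SpecialLinearGroup (Fin 2) ℂ) :
              Matrix (Fin 2) (Fin 2) ℂ) = !![p.1, 0; p.2, p.1⁻¹]} = 2 :=
  stmt_4_general A B htr htr2 htrm2 h
end

section
/- Let A, B ∈ SL(2,ℂ) be such that tr(A) ≠ 2 and tr(A) ≠ −2, B has an eigenvalue of modulus different from 1, and A and B have no common eigenvector (no nonzero v ∈ ℂ² is an eigenvector of both A and B). Then there exists N such that for every integer n ≥ N, the matrices A and Bⁿ·A·B⁻ⁿ have no common eigenvector. -/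
open Matrix

/-!
Linear automorphisms permute the subspaces of `K²`, and `A` and `Bⁿ A B⁻ⁿ` share an eigenvector
exactly when `Bⁿ` carries an eigenline of `A` to an eigenline of `A`. A non-scalar `A` has only
finitely many eigenlines, so this can happen for infinitely many `n` only if some power `Bᵏ` with
`k ≥ 1` fixes an eigenline `L` of `A`. If `Bᵏ` is not scalar, then `L` is an eigenspace of `Bᵏ`,
so `B`, which commutes with `Bᵏ`, preserves `L` as well, and `L` consists of common eigenvectors of
`A` and `B`.

An eigenvalue of modulus `≠ 1` prevents every power of `B` from being scalar, because the only
scalar matrices in `SL(2, ℂ)` are `±1`.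
-/

open Module
open scoped Pointwise

theorem finite_setOf_exists_pow_smul_mem {G α : Type*} [Group G] [MulAction G α] {g : G}
    {S : Set α} (hS : S.Finite) (hper : ∀ x ∈ S, ∀ k : ℕ, k ≠ 0 → g ^ k • x ≠ x) :
    {n : ℕ | ∃ x ∈ S, g ^ n • x ∈ S}.Finite := by
  have orbit_injective : ∀ x ∈ S, Function.Injective fun n : ℕ ↦ g ^ n • x := by
    refine fun x hx ↦ Function.Injective.of_lt_imp_ne fun m n hmn heq ↦ ?_
    refine hper x hx (n - m) (Nat.sub_ne_zero_of_lt hmn) (MulAction.injective (g ^ m) ?_)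
    simpa only [smul_smul, ← pow_add, Nat.add_sub_cancel' hmn.le] using heq.symm
  have returns_finite := hS.biUnion fun x hx ↦ hS.preimage (orbit_injective x hx).injOn
  exact returns_finite.subset fun n ⟨x, hx, hgx⟩ ↦ Set.mem_biUnion hx hgx

section CommRing

variable {R M : Type*} [CommRing R] [AddCommGroup M] [Module R M]

/-- Two endomorphisms have a common eigenvector, possibly for different eigenvalues. On a plane,
the absence of one is the irreducibility of the pair. -/
def HaveCommonEigenvector (f g : End R M) : Prop :=
  ∃ v : M, v ≠ 0 ∧ (∃ a : R, f v = a • v) ∧ ∃ b : R, g v = b • v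

theorem smul_eigenspace_eq_eigenspace_conj (f : End R M) (e : M ≃ₗ[R] M) (μ : R) :
    e • f.eigenspace μ = (e.conj f).eigenspace μ := by
  ext v
  rw [Submodule.mem_smul_pointwise_iff_exists, End.mem_eigenspace_iff, LinearEquiv.conj_apply_apply,
    ← LinearEquiv.eq_symm_apply, map_smul]
  constructor
  · rintro ⟨w, hw, rfl⟩
    simpa using hw
  · exact fun h ↦ ⟨e.symm v, End.mem_eigenspace_iff.mpr h, e.apply_symm_apply v⟩

end CommRing

section Field

variable {K V : Type*} [Field K] [AddCommGroup V] [Module K V] [FiniteDimensional K V]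
  {f g h : End K V} {e : V ≃ₗ[K] V}

theorem eigenspace_eq_span_singleton {μ : K} {v : V} (hline : finrank K (f.eigenspace μ) ≤ 1)
    (hv : f.HasEigenvector μ v) : f.eigenspace μ = K ∙ v := by
  refine (Submodule.eq_of_le_of_finrank_le ?_ ?_).symm
  · exact (Submodule.span_singleton_le_iff_mem v _).mpr hv.1
  · rwa [finrank_span_singleton hv.2]

theorem HaveCommonEigenvector.of_commute (hfh : HaveCommonEigenvector f h)
    (hline : ∀ μ, finrank K (h.eigenspace μ) ≤ 1) (hcomm : Commute h g) :
    HaveCommonEigenvector f g := by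
  obtain ⟨v, hv0, hfv, c, hhv⟩ := hfh
  have hv : h.HasEigenvector c v := ⟨End.mem_eigenspace_iff.mpr hhv, hv0⟩
  have hgv : g v ∈ h.eigenspace c := End.mapsTo_genEigenspace_of_comm hcomm c 1 hv.1
  rw [eigenspace_eq_span_singleton (hline c) hv, Submodule.mem_span_singleton] at hgv
  obtain ⟨b, hb⟩ := hgv
  exact ⟨v, hv0, hfv, b, hb.symm⟩

theorem haveCommonEigenvector_of_smul_eigenspace_eq {μ : K} (hμ : f.HasEigenvalue μ)
    (hline : finrank K (f.eigenspace μ) ≤ 1) (he : e • f.eigenspace μ = f.eigenspace μ) :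
    HaveCommonEigenvector f e := by
  obtain ⟨v, hv⟩ := hμ.exists_hasEigenvector
  have hev : e • v ∈ f.eigenspace μ := he ▸ Submodule.smul_mem_pointwise_smul v e _ hv.1
  rw [eigenspace_eq_span_singleton hline hv, Submodule.mem_span_singleton] at hev
  obtain ⟨b, hb⟩ := hev
  exact ⟨v, hv.2, ⟨μ, hv.apply_eq_smul⟩, b, hb.symm⟩

theorem HaveCommonEigenvector.exists_smul_eigenspace_eq
    (hf : HaveCommonEigenvector f (e.conj f)) (hline : ∀ μ, finrank K (f.eigenspace μ) ≤ 1) :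
    ∃ μ ν, f.HasEigenvalue μ ∧ f.HasEigenvalue ν ∧ e • f.eigenspace μ = f.eigenspace ν := by
  obtain ⟨v, hv0, ⟨ν, hfv⟩, μ, hconj⟩ := hf
  have hν : f.HasEigenvector ν v := ⟨End.mem_eigenspace_iff.mpr hfv, hv0⟩
  have hv : v ∈ e • f.eigenspace μ := by
    rwa [smul_eigenspace_eq_eigenspace_conj, End.mem_eigenspace_iff]
  obtain ⟨w, hw, rfl⟩ := (Submodule.mem_smul_pointwise_iff_exists _ _ _).mp hv
  have hμ : f.HasEigenvector μ w := ⟨hw, fun hw0 ↦ hv0 (by rw [hw0, smul_zero])⟩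
  refine ⟨μ, ν, End.hasEigenvalue_of_hasEigenvector hμ, End.hasEigenvalue_of_hasEigenvector hν, ?_⟩
  rw [eigenspace_eq_span_singleton (hline μ) hμ, eigenspace_eq_span_singleton (hline ν) hν,
    Submodule.smul_span, Set.smul_set_singleton]

theorem finite_setOf_haveCommonEigenvector_conj_pow
    (hline : ∀ μ, finrank K (f.eigenspace μ) ≤ 1)
    (hpow : ∀ k : ℕ, k ≠ 0 → ¬ HaveCommonEigenvector f (e ^ k : V ≃ₗ[K] V)) :
    {n : ℕ | HaveCommonEigenvector f ((e ^ n).conj f)}.Finite := by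
  have eigenspaces_finite : (f.eigenspace '' {μ | f.HasEigenvalue μ}).Finite :=
    f.finite_hasEigenvalue.image _
  refine (finite_setOf_exists_pow_smul_mem (g := e) eigenspaces_finite ?_).subset ?_
  · rintro _ ⟨μ, hμ, rfl⟩ k hk hfix
    exact hpow k hk (haveCommonEigenvector_of_smul_eigenspace_eq hμ (hline μ) hfix)
  · intro n hn
    obtain ⟨μ, ν, hμ, hν, hμν⟩ := hn.exists_smul_eigenspace_eq hline
    exact ⟨_, ⟨μ, hμ, rfl⟩, ν, hν, hμν.symm⟩

theorem finrank_eigenspace_lt (hf : f ∉ Set.range (algebraMap K (End K V))) (μ : K) :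
    finrank K (f.eigenspace μ) < finrank K V := by
  refine Submodule.finrank_lt fun htop ↦ hf ⟨μ, LinearMap.ext fun v ↦ ?_⟩
  have hv : v ∈ f.eigenspace μ := htop ▸ Submodule.mem_top
  rw [End.mem_eigenspace_iff.mp hv, algebraMap_end_apply]

theorem finite_setOf_haveCommonEigenvector_conj_pow_of_finrank_eq_two (hV : finrank K V = 2)
    (hf : f ∉ Set.range (algebraMap K (End K V)))
    (he : ∀ k : ℕ, k ≠ 0 → ((e ^ k : V ≃ₗ[K] V) : End K V) ∉ Set.range (algebraMap K (End K V)))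
    (hfe : ¬ HaveCommonEigenvector f e) :
    {n : ℕ | HaveCommonEigenvector f ((e ^ n).conj f)}.Finite := by
  have hline {g : End K V} (hg : g ∉ Set.range (algebraMap K (End K V))) (μ : K) :
      finrank K (g.eigenspace μ) ≤ 1 :=
    Nat.lt_succ_iff.mp ((finrank_eigenspace_lt hg μ).trans_eq hV)
  refine finite_setOf_haveCommonEigenvector_conj_pow (hline hf) fun k hk hfek ↦ ?_
  have hcomm : Commute ((e ^ k : V ≃ₗ[K] V) : End K V) e :=
    LinearMap.ext fun v ↦ LinearEquiv.congr_fun ((Commute.refl e).pow_left k) v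
  exact hfe (hfek.of_commute (hline (he k hk)) hcomm)

end Field

theorem toLin'_mem_range_algebraMap_iff {R n : Type*} [CommRing R] [Fintype n] [DecidableEq n]
    {A : Matrix n n R} :
    A.toLin' ∈ Set.range (algebraMap R (End R (n → R))) ↔ A ∈ Set.range (scalar n) := by
  refine exists_congr fun a ↦ ?_
  rw [← toLinAlgEquiv'.commutes]
  exact toLinAlgEquiv'.injective.eq_iff

theorem notMem_range_scalar_of_trace_ne {R : Type*} [CommRing R] [IsDomain R]
    {A : Matrix (Fin 2) (Fin 2) R} (hdet : A.det = 1) (htr : A.trace ≠ 2) (htr' : A.trace ≠ -2) :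
    A ∉ Set.range (scalar (Fin 2)) := by
  rintro ⟨a, rfl⟩
  have ha : a * a = 1 := by simpa [sq] using hdet
  rcases mul_self_eq_one_iff.mp ha with rfl | rfl
  · exact htr (by simp)
  · exact htr' (by simp)

theorem pow_notMem_range_scalar_of_not_isOfFinOrder {R n : Type*} [CommRing R] [IsDomain R]
    [Fintype n] [DecidableEq n] {B : Matrix n n R} {v : n → R} {b : R} {k : ℕ} (hdet : B.det = 1)
    (hv : v ≠ 0) (hBv : B *ᵥ v = b • v) (hb : ¬ IsOfFinOrder b) (hk : k ≠ 0) :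
    B ^ k ∉ Set.range (scalar n) := by
  rintro ⟨a, ha⟩
  have hvec : End.HasEigenvector B.toLin' b v := ⟨End.mem_eigenspace_iff.mpr hBv, hv⟩
  have ha_eq : a = b ^ k := by
    refine smul_left_injective R hv ?_
    simpa [← toLin'_pow, ← ha] using hvec.pow_apply k
  have ha_pow : a ^ Fintype.card n = 1 := by
    simpa [hdet] using congrArg det ha
  have : Nonempty n := ⟨(Function.ne_iff.mp hv).choose⟩
  refine hb (isOfFinOrder_iff_pow_eq_one.mpr
    ⟨k * Fintype.card n, Nat.pos_of_ne_zero (mul_ne_zero hk Fintype.card_ne_zero), ?_⟩)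
  rw [pow_mul, ← ha_eq, ha_pow]

theorem stmt_5_general {K : Type*} [Field K] (A : Matrix (Fin 2) (Fin 2) K) (B : GL (Fin 2) K)
    (hA : A ∉ Set.range (scalar (Fin 2)))
    (hB : ∀ k : ℕ, k ≠ 0 → (B : Matrix (Fin 2) (Fin 2) K) ^ k ∉ Set.range (scalar (Fin 2)))
    (h : ¬ ∃ v : Fin 2 → K, v ≠ 0 ∧ (∃ a : K, A *ᵥ v = a • v) ∧
      ∃ b : K, (B : Matrix (Fin 2) (Fin 2) K) *ᵥ v = b • v) :
    ∃ N : ℕ, ∀ n : ℕ, N ≤ n → ¬ ∃ v : Fin 2 → K, v ≠ 0 ∧ (∃ a : K, A *ᵥ v = a • v) ∧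
      ∃ c : K, ((B ^ n : GL (Fin 2) K) * A * ((B ^ n)⁻¹ : GL (Fin 2) K) :
        Matrix (Fin 2) (Fin 2) K) *ᵥ v = c • v := by
  let toEquiv : GL (Fin 2) K →* ((Fin 2 → K) ≃ₗ[K] (Fin 2 → K)) :=
    (LinearMap.GeneralLinearGroup.generalLinearEquiv K (Fin 2 → K)).toMonoidHom.comp
      GeneralLinearGroup.toLin.toMonoidHom
  have toEquiv_pow_notMem (k : ℕ) (hk : k ≠ 0) :
      ((toEquiv B ^ k : (Fin 2 → K) ≃ₗ[K] (Fin 2 → K)) : End K (Fin 2 → K)) ∉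
        Set.range (algebraMap K (End K (Fin 2 → K))) := by
    rw [← map_pow]
    exact mt toLin'_mem_range_algebraMap_iff.mp (hB k hk)
  have hfin := finite_setOf_haveCommonEigenvector_conj_pow_of_finrank_eq_two (f := A.toLin')
    (e := toEquiv B) (finrank_fin_fun K) (mt toLin'_mem_range_algebraMap_iff.mp hA)
    toEquiv_pow_notMem h
  rw [← Filter.eventually_atTop, ← Nat.cofinite_eq_atTop]
  filter_upwards [hfin.compl_mem_cofinite] with n hn
  rintro ⟨v, hv, ha, c, hc⟩
  refine hn ⟨v, hv, ha, c, ?_⟩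
  rw [← map_pow, ← hc, ← mulVec_mulVec, ← mulVec_mulVec]
  rfl

/-- If `A, B ∈ SL(2,ℂ)` have no common eigenvector, `tr A ≠ ±2`, and `B` has an
eigenvalue of modulus `≠ 1`, then for all large `n` the matrices `A` and
`Bⁿ·A·B⁻ⁿ` have no common eigenvector. -/
theorem stmt_5 (A B : Matrix.SpecialLinearGroup (Fin 2) ℂ)
    (htr2 : Matrix.trace (A : Matrix (Fin 2) (Fin 2) ℂ) ≠ 2)
    (htrm2 : Matrix.trace (A : Matrix (Fin 2) (Fin 2) ℂ) ≠ -2)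
    (hB : ∃ v : Fin 2 → ℂ, v ≠ 0 ∧ ∃ b : ℂ,
        (B : Matrix (Fin 2) (Fin 2) ℂ).mulVec v = b • v ∧ ‖b‖ ≠ 1)
    (h : ¬ ∃ v : Fin 2 → ℂ, v ≠ 0 ∧
        (∃ a : ℂ, (A : Matrix (Fin 2) (Fin 2) ℂ).mulVec v = a • v) ∧
        (∃ b : ℂ, (B : Matrix (Fin 2) (Fin 2) ℂ).mulVec v = b • v)) :
    ∃ N : ℕ, ∀ n : ℕ, N ≤ n →
      ¬ ∃ v : Fin 2 → ℂ, v ≠ 0 ∧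
          (∃ a : ℂ, (A : Matrix (Fin 2) (Fin 2) ℂ).mulVec v = a • v) ∧
          (∃ c : ℂ, ((B ^ n * A * (B ^ n)⁻¹ : Matrix.SpecialLinearGroup (Fin 2) ℂ) :
              Matrix (Fin 2) (Fin 2) ℂ).mulVec v = c • v) := by
  obtain ⟨v, hv, b, hBv, hb⟩ := hB
  have hA := notMem_range_scalar_of_trace_ne A.det_coe htr2 htrm2
  have hB_pow (k : ℕ) (hk : k ≠ 0) : (B : Matrix (Fin 2) (Fin 2) ℂ) ^ k ∉
      Set.range (scalar (Fin 2)) :=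
    pow_notMem_range_scalar_of_not_isOfFinOrder B.det_coe hv hBv
      (mt IsOfFinOrder.norm_eq_one hb) hk
  simpa only [← map_pow] using! stmt_5_general (K := ℂ) A B hA hB_pow h
end

section
/- Let S be a dense additive subgroup of ℂ, let f : ℂ → ℂ be measurable, and let h : ℂ → ℂ be a function such that for Lebesgue-almost every z ∈ ℂ, the identity f(z + s) = f(z) + h(z)·s holds for all s ∈ S. Then there exist constants c, h₀ ∈ ℂ such that f(z) = c + h₀·z for Lebesgue-almost every z ∈ ℂ. -/
open MeasureTheory

/-!
A measurable set `A` that is almost invariant under a dense set of translations restricts Haar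
measure `μ` to a measure `μ.restrict A` that is invariant under those translations, hence under all
of them, since integrals of compactly supported continuous functions vary continuously under
translation. By uniqueness of Haar measure `μ.restrict A` is a multiple of `μ`, so `A` is null or
conull. Consequently an almost everywhere measurable function that is almost invariant under a
dense set of translations is almost everywhere constant.

If `f (x + s) = f x + h x s` for `s ∈ S`, then comparing the increments of `f` along `t` and `t + s`
shows that `h (x + t) s = h x s`, so `x ↦ h x s` is almost everywhere constant. Since `S` contains a
basis, `h` is almost everywhere equal to a single linear map `L`, and then `f - L` is almost
invariant under `S`, hence almost everywhere constant.
-/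

section Translation

variable {G : Type*} [AddGroup G] [TopologicalSpace G] [IsTopologicalAddGroup G]
  [LocallyCompactSpace G] [MeasurableSpace G] [BorelSpace G] {D : Set G}

lemma continuous_integral_apply_add_left {E : Type*} [NormedAddCommGroup E] [NormedSpace ℝ E]
    (ν : Measure G) [IsFiniteMeasureOnCompacts ν] {φ : G → E} (hφ : Continuous φ)
    (hφc : HasCompactSupport φ) : Continuous fun t ↦ ∫ x, φ (t + x) ∂ν := by
  have hneg : Continuous fun t ↦ ∫ x, φ (-(-x + t)) ∂ν :=
    continuous_integral_apply_neg_add (g := φ ∘ Neg.neg) (hφ.comp continuous_neg)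
      (hφc.comp_homeomorph (Homeomorph.neg G))
  simpa only [Function.comp_def, neg_add_rev, neg_neg] using hneg.comp continuous_neg

lemma isAddLeftInvariant_of_dense [T2Space G] {ν : Measure G} [ν.Regular] (hD : Dense D)
    (hν : ∀ t ∈ D, ν.map (t + ·) = ν) : ν.IsAddLeftInvariant := by
  have integral_map_add (t : G) (φ : G → ℝ) :
      ∫ x, φ x ∂ν.map (t + ·) = ∫ x, φ (t + x) ∂ν :=
    (Homeomorph.addLeft t).measurableEmbedding.integral_map φ
  refine ⟨fun t ↦ ?_⟩
  have : (ν.map (t + ·)).Regular := Measure.Regular.map (Homeomorph.addLeft t)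
  refine Measure.ext_of_integral_eq_on_compactlySupported fun φ ↦ ?_
  have hconst : (fun t ↦ ∫ x, φ (t + x) ∂ν) = fun _ ↦ ∫ x, φ x ∂ν :=
    (continuous_integral_apply_add_left ν φ.continuous φ.hasCompactSupport).ext_on hD
      continuous_const fun t ht ↦ (integral_map_add t φ).symm.trans (by rw [hν t ht])
  rw [integral_map_add]
  exact congrFun hconst t

variable [T2Space G] [SecondCountableTopology G] {μ : Measure G} [μ.IsAddHaarMeasure]

lemma aeconst_of_dense_preimage_add_left_ae_eq (hD : Dense D) {A : Set G}
    (hA : NullMeasurableSet A μ) (hinv : ∀ t ∈ D, (t + ·) ⁻¹' A =ᵐ[μ] A) :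
    Filter.EventuallyConst A (ae μ) := by
  have hmap (t : G) (ht : t ∈ D) : (μ.restrict A).map (t + ·) = μ.restrict A := calc
    (μ.restrict A).map (t + ·) = (μ.restrict ((t + ·) ⁻¹' A)).map (t + ·) := by
      rw [Measure.restrict_congr_set (hinv t ht)]
    _ = μ.restrict A := ((measurePreserving_add_left μ t).restrict_preimage_emb
      (measurableEmbedding_addLeft t) A).map_eq
  have := isAddLeftInvariant_of_dense hD hmap
  obtain ⟨c, hc⟩ : ∃ c : NNReal, μ.restrict A = c • μ :=
    ⟨_, Measure.isAddLeftInvariant_eq_smul (μ.restrict A) μ⟩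
  have hzero : c • μ Aᶜ = 0 := by
    rw [← Measure.smul_apply, ← hc, Measure.restrict_apply₀' hA, Set.compl_inter_self,
      measure_empty]
  rw [Filter.eventuallyConst_set']
  rcases smul_eq_zero.mp hzero with rfl | hAc
  · rw [zero_smul, Measure.restrict_eq_zero] at hc
    exact .inl (ae_eq_empty.mpr hc)
  · exact .inr (ae_eq_univ.mpr hAc)

lemma exists_ae_eq_const_of_dense_add_left {β : Type*} [Nonempty β] [MeasurableSpace β]
    [MeasurableSpace.CountablySeparated β] (hD : Dense D) {g : G → β} (hg : AEMeasurable g μ)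
    (hinv : ∀ t ∈ D, ∀ᵐ x ∂μ, g (t + x) = g x) : ∃ c, ∀ᵐ x ∂μ, g x = c :=
  Filter.exists_eventuallyEq_const_of_forall_separating MeasurableSet fun U hU ↦
    Filter.eventuallyConst_set.mp <|
      aeconst_of_dense_preimage_add_left_ae_eq hD (hg.nullMeasurable hU) fun t ht ↦
        Filter.EventuallyEq.preimage (hinv t ht) U

end Translation

lemma span_eq_top_of_dense (𝕜 : Type*) {E : Type*} [NontriviallyNormedField 𝕜] [CompleteSpace 𝕜]
    [AddCommGroup E] [TopologicalSpace E] [IsTopologicalAddGroup E] [T2Space E] [Module 𝕜 E]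
    [ContinuousSMul 𝕜 E] [FiniteDimensional 𝕜 E] {D : Set E} (hD : Dense D) :
    Submodule.span 𝕜 D = ⊤ := by
  have hclosed := (Submodule.span 𝕜 D).closed_of_finiteDimensional
  rw [← hclosed.submodule_topologicalClosure_eq, ← Submodule.dense_iff_topologicalClosure_eq_top]
  exact hD.mono Submodule.subset_span

section Increments

variable {𝕜 E F : Type*} [NontriviallyNormedField 𝕜] [ProperSpace 𝕜]
  [NormedAddCommGroup E] [NormedSpace 𝕜 E] [FiniteDimensional 𝕜 E]
  [MeasurableSpace E] [BorelSpace E] {μ : Measure E} [μ.IsAddHaarMeasure]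
  [NormedAddCommGroup F] [NormedSpace 𝕜 F] [SecondCountableTopology F]
  [MeasurableSpace F] [BorelSpace F]
  {S : AddSubsemigroup E} {f : E → F} {h : E → E →ₗ[𝕜] F}

lemma exists_ae_apply_eq_const_of_increments (hS : Dense (S : Set E)) (hf : AEMeasurable f μ)
    (hrel : ∀ s ∈ S, ∀ᵐ x ∂μ, f (x + s) = f x + h x s) {s : E} (hs : s ∈ S) :
    ∃ y, ∀ᵐ x ∂μ, h x s = y := by
  have := FiniteDimensional.proper 𝕜 E
  have increment_eq : ∀ᵐ x ∂μ, f (x + s) - f x = h x s := by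
    filter_upwards [hrel s hs] with x hx
    rw [hx, add_sub_cancel_left]
  have hmeas : AEMeasurable (fun x ↦ f (x + s) - f x) μ :=
    (hf.comp_quasiMeasurePreserving (quasiMeasurePreserving_add_right μ s)).sub hf
  obtain ⟨y, hy⟩ := exists_ae_eq_const_of_dense_add_left hS hmeas fun t ht ↦ by
    filter_upwards [hrel t ht, hrel (t + s) (S.add_mem ht hs), increment_eq] with x hxt hxts hxs
    rw [hxs, add_comm t x, add_assoc, hxts, hxt, map_add]
    abel
  refine ⟨y, ?_⟩
  filter_upwards [increment_eq, hy] with x hxs hxy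
  rw [← hxs, hxy]

lemma exists_ae_eq_linearMap_of_increments (hS : Dense (S : Set E)) (hf : AEMeasurable f μ)
    (hrel : ∀ s ∈ S, ∀ᵐ x ∂μ, f (x + s) = f x + h x s) :
    ∃ L : E →ₗ[𝕜] F, ∀ᵐ x ∂μ, h x = L := by
  let b := Module.Basis.ofSpan (span_eq_top_of_dense 𝕜 hS).ge
  have hbS (i) : b i ∈ S := Module.Basis.ofSpan_subset _ (Set.mem_range_self i)
  choose y hy using fun i ↦ exists_ae_apply_eq_const_of_increments hS hf hrel (hbS i)
  have := Module.Finite.finite_basis b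
  refine ⟨b.constr ℕ y, ?_⟩
  filter_upwards [ae_all_iff.mpr hy] with x hx
  exact b.ext fun i ↦ by rw [hx, b.constr_basis]

theorem stmt_9_general (hS : Dense (S : Set E)) (hf : AEMeasurable f μ)
    (hrel : ∀ s ∈ S, ∀ᵐ x ∂μ, f (x + s) = f x + h x s) :
    ∃ (c : F) (L : E →ₗ[𝕜] F), ∀ᵐ x ∂μ, f x = c + L x := by
  have := FiniteDimensional.proper 𝕜 E
  obtain ⟨L, hL⟩ := exists_ae_eq_linearMap_of_increments hS hf hrel
  have hmeas : AEMeasurable (fun x ↦ f x - L x) μ :=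
    hf.sub L.continuous_of_finiteDimensional.measurable.aemeasurable
  obtain ⟨c, hc⟩ := exists_ae_eq_const_of_dense_add_left hS hmeas fun s hs ↦ by
    filter_upwards [hrel s hs, hL] with x hx hxL
    rw [add_comm s x, hx, hxL, map_add]
    abel
  refine ⟨c, L, ?_⟩
  filter_upwards [hc] with x hx
  exact sub_eq_iff_eq_add.mp hx

end Increments

/-- If a measurable `f : ℂ → ℂ` satisfies `f(z+s) = f(z) + h(z)·s` for all `s` in a
dense additive subgroup, for a.e. `z`, then `f` is a.e. affine. -/
theorem stmt_9 (S : AddSubgroup ℂ) (hS : Dense (S : Set ℂ))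
    (f : ℂ → ℂ) (hf : Measurable f) (h : ℂ → ℂ)
    (hrel : ∀ᵐ z : ℂ ∂volume, ∀ s ∈ S, f (z + s) = f z + h z * s) :
    ∃ c h₀ : ℂ, ∀ᵐ z : ℂ ∂volume, f z = c + h₀ * z := by
  obtain ⟨c, L, hL⟩ := stmt_9_general (S := S.toAddSubsemigroup) (h := fun z ↦ .mulLeft ℂ (h z))
    hS hf.aemeasurable fun s hs ↦ hrel.mono fun z hz ↦ hz s hs
  refine ⟨c, L 1, hL.mono fun z hz ↦ ?_⟩
  rw [hz, mul_comm, ← smul_eq_mul z, ← map_smul, smul_eq_mul, mul_one]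
end
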